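/- Let A,B>0, ρ*≥0, θ=ρ*/(B+ρ*), k∈[0,1), and let β>0 satisfy e^{−β}>2k. Set a=θ(2k−e^{−β})/(1−k), C₁=(e^β−1)/β, and suppose F := β − θ²C₁[(2−e^{−β}) + ((2k−e^{−β})/(1−k))²] ≥ 0. Let d:[0,∞)→ℝ be continuous and let ρ∈C¹([0,∞)×[0,1]) satisfy ∂_tρ(t,x)+λ_W(t)∂_xρ(t,x)=0, where W(t)=∫₀¹ρ(t,x)dx satisfies B+ρ*+W(t)>0 and λ_W(t)=A/(B+ρ*+W(t)), together with the boundary condition ρ(t,0) = kρ(t,1) + (1−k)θW(t) + k·d(t) for all t>0. Define L(t)=∫₀¹ρ(t,x)²e^{−βx}dx + aW(t)². Then for all t>0: L'(t) ≤ −(F/C₁)·λ_W(t)·L(t) + (3/2)e^{−β}·λ_W(t)·d(t)². -/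

import Mathlib

open Real Set MeasureTheory


/-- Differentiation under the integral sign on `[0,1]`. -/
theorem deriv_under_integral (g g' : ℝ → ℝ → ℝ) (t₀ : ℝ) (ht₀ : 0 < t₀)
    (hg : ∀ t > (0:ℝ), ContinuousOn (g t) (Icc (0:ℝ) 1))
    (hgg : ∀ t > (0:ℝ), ∀ x ∈ Icc (0:ℝ) 1, HasDerivAt (fun s => g s x) (g' t x) t)
    (hc : ContinuousOn (fun p : ℝ × ℝ => g' p.1 p.2) (Ici (0:ℝ) ×ˢ Icc (0:ℝ) 1)) :
    HasDerivAt (fun t => ∫ x in (0:ℝ)..1, g t x) (∫ x in (0:ℝ)..1, g' t₀ x) t₀ := by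
  have hK : IsCompact (Icc (t₀/2) (2*t₀) ×ˢ Icc (0:ℝ) 1) := isCompact_Icc.prod isCompact_Icc
  obtain ⟨M, hM⟩ := hK.exists_bound_of_continuousOn (hc.mono (by
    rintro ⟨t, x⟩ ⟨h1, h2⟩
    exact ⟨by have := h1.1; simp only [mem_Ici]; simp only at this; linarith, h2⟩))
  have hu : Set.uIoc (0:ℝ) 1 = Ioc 0 1 := uIoc_of_le zero_le_one
  have hmeas : ∀ f : ℝ → ℝ, ContinuousOn f (Icc (0:ℝ) 1) →
      AEStronglyMeasurable f (volume.restrict (Set.uIoc (0:ℝ) 1)) := by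
    intro f hf
    rw [hu]
    exact (hf.mono Ioc_subset_Icc_self).aestronglyMeasurable measurableSet_Ioc
  have key := intervalIntegral.hasDerivAt_integral_of_dominated_loc_of_deriv_le
    (μ := volume) (a := 0) (b := 1) (F := g) (F' := g') (x₀ := t₀) (s := Ioo (t₀/2) (2*t₀))
    (bound := fun _ => M) (Ioo_mem_nhds (by linarith) (by linarith)) ?_ ?_ ?_ ?_ ?_ ?_
  · exact key.2
  · filter_upwards [Ioi_mem_nhds ht₀] with t ht
    exact hmeas _ (hg t ht)
  · apply ContinuousOn.intervalIntegrable
    rw [uIcc_of_le zero_le_one]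
    exact hg _ ht₀
  · apply hmeas
    exact hc.comp (f := fun x : ℝ => (t₀, x)) (by fun_prop) (fun x hx => ⟨ht₀.le, hx⟩)
  · refine Filter.Eventually.of_forall fun x hx t ht => ?_
    rw [hu] at hx
    exact hM (t, x) ⟨⟨ht.1.le, ht.2.le⟩, ⟨hx.1.le, hx.2⟩⟩
  · exact intervalIntegrable_const
  · refine Filter.Eventually.of_forall fun x hx t ht => ?_
    rw [hu] at hx
    exact hgg t (by have := ht.1; linarith) x ⟨hx.1.le, hx.2⟩

theorem quad_form (k E m y w d : ℝ) (hk0 : 0 ≤ k) (hk1 : 2 * k < E) (hE : E < 1) :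
    (k*y+(1-k)*w+k*d)^2 - E*y^2 + 2*w*(2*k-E)*(w-y) + 2*w*m*k*d
      ≤ ((2-E)+m^2)*w^2 + 3/2*E*d^2 := by
  have h1 : 0 ≤ (E-k-k^2)*(w-y)^2 := mul_nonneg (by nlinarith) (sq_nonneg _)
  have h2 : 0 ≤ k*(y-k*d)^2 := mul_nonneg hk0 (sq_nonneg _)
  have h3 : 0 ≤ (1-k)*(w-k*d)^2 := mul_nonneg (by linarith) (sq_nonneg _)
  have h4 : 0 ≤ (m*w-k*d)^2 := sq_nonneg _
  have h5 : 0 ≤ (3/2*E-3*k^2)*d^2 := mul_nonneg (by nlinarith) (sq_nonneg _)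
  nlinarith

theorem cauchy_weight (f : ℝ → ℝ) (β C : ℝ) (hβ : 0 < β) (hC : C = (Real.exp β - 1) / β)
    (hf : ContinuousOn f (Icc (0:ℝ) 1)) :
    (∫ x in (0:ℝ)..1, f x)^2 ≤ C * ∫ x in (0:ℝ)..1, f x ^ 2 * Real.exp (-β * x) := by
  have hCpos : 0 < C := by
    rw [hC]; apply div_pos _ hβ; have := Real.add_one_lt_exp hβ.ne'; linarith
  have hI : ∀ h : ℝ → ℝ, ContinuousOn h (Icc (0:ℝ) 1) → IntervalIntegrable h volume 0 1 := by
    intro h hh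
    apply ContinuousOn.intervalIntegrable
    rwa [uIcc_of_le zero_le_one]
  have hexp : ∫ x in (0:ℝ)..1, Real.exp (β * x) = C := by
    rw [hC, intervalIntegral.integral_comp_mul_left (fun x => Real.exp x) hβ.ne', integral_exp]
    simp
    field_simp
  set I := ∫ x in (0:ℝ)..1, f x with hIdef
  set V := ∫ x in (0:ℝ)..1, f x ^ 2 * Real.exp (-β * x) with hV
  set c := I / C with hc
  have h1 : ∫ x in (0:ℝ)..1, (f x ^ 2 * Real.exp (-β * x) - (2*c) * f x
      + c^2 * Real.exp (β * x)) = V - 2*c*I + c^2*C := by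
    rw [intervalIntegral.integral_add, intervalIntegral.integral_sub,
      intervalIntegral.integral_const_mul, intervalIntegral.integral_const_mul, hexp]
    all_goals apply hI; fun_prop
  have h2 : 0 ≤ ∫ x in (0:ℝ)..1, (f x ^ 2 * Real.exp (-β * x) - (2*c) * f x
      + c^2 * Real.exp (β * x)) := by
    apply intervalIntegral.integral_nonneg zero_le_one
    intro x _
    have e : Real.exp (-β*x) * Real.exp (β*x) = 1 := by rw [← Real.exp_add]; simp
    have : f x ^ 2 * Real.exp (-β * x) - (2*c) * f x + c^2 * Real.exp (β * x)
        = Real.exp (-β*x) * (f x - c * Real.exp (β*x))^2 := by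
      linear_combination (2*c*f x - c^2*Real.exp (β*x)) * e
    rw [this]; positivity
  rw [h1] at h2
  have h3 : c * C = I := by rw [hc]; field_simp
  have h4 : 0 ≤ C * (V - 2*c*I + c^2*C) := mul_nonneg hCpos.le h2
  have : C * (V - 2*c*I + c^2*C) = C * V - I^2 := by rw [← h3]; ring
  linarith

/-- ISS-Lyapunov dissipation estimate for the transformed closed-loop system. -/
theorem iss_lyapunov_dissipation
    (A B ρs θ k β a C₁ F : ℝ)
    (hA : 0 < A) (hB : 0 < B) (hρs : 0 ≤ ρs) (hθ : θ = ρs / (B + ρs))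
    (hk0 : 0 ≤ k) (hk1 : k < 1) (hβ : 0 < β) (hkβ : 2 * k < Real.exp (-β))
    (ha : a = θ * (2 * k - Real.exp (-β)) / (1 - k))
    (hC₁ : C₁ = (Real.exp β - 1) / β)
    (hF : F = β - θ ^ 2 * C₁ *
      ((2 - Real.exp (-β)) + ((2 * k - Real.exp (-β)) / (1 - k)) ^ 2))
    (hFpos : 0 ≤ F)
    (d : ℝ → ℝ) (hd : Continuous d)
    (ρ : ℝ → ℝ → ℝ)
    (hreg : ContDiffOn ℝ 1 (fun p : ℝ × ℝ => ρ p.1 p.2) (Ici (0:ℝ) ×ˢ Icc (0:ℝ) 1))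
    (W lamW L : ℝ → ℝ)
    (hW : ∀ t, W t = ∫ x in (0:ℝ)..1, ρ t x)
    (hWpos : ∀ t ≥ (0:ℝ), 0 < B + ρs + W t)
    (hlamW : ∀ t, lamW t = A / (B + ρs + W t))
    (hpde : ∀ t > (0:ℝ), ∀ x ∈ Ioo (0:ℝ) 1,
      deriv (fun s => ρ s x) t + lamW t * deriv (fun y => ρ t y) x = 0)
    (hbc : ∀ t > (0:ℝ), ρ t 0 = k * ρ t 1 + (1 - k) * θ * W t + k * d t)
    (hL : ∀ t, L t = (∫ x in (0:ℝ)..1, (ρ t x) ^ 2 * Real.exp (-β * x)) + a * (W t) ^ 2) :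
    ∀ t > (0:ℝ),
      deriv L t ≤ -(F / C₁) * lamW t * L t + (3 / 2) * Real.exp (-β) * lamW t * (d t) ^ 2 := by
  intro t ht
  set S : Set (ℝ × ℝ) := Ici (0:ℝ) ×ˢ Icc (0:ℝ) 1 with hS
  set f : ℝ × ℝ → ℝ := fun p => ρ p.1 p.2 with hf
  have hSu : UniqueDiffOn ℝ S := (uniqueDiffOn_Ici 0).prod (uniqueDiffOn_Icc zero_lt_one)
  set G := fderivWithin ℝ f S with hG
  have hGc : ContinuousOn G S := hreg.continuousOn_fderivWithin hSu le_rfl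
  have hfc : ContinuousOn f S := hreg.continuousOn
  have hfd : ∀ p ∈ S, HasFDerivWithinAt f (G p) S p := fun p hp =>
    ((hreg.differentiableOn one_ne_zero) p hp).hasFDerivWithinAt
  have hdt : ∀ s > (0:ℝ), ∀ x ∈ Icc (0:ℝ) 1, HasDerivAt (fun s => ρ s x) (G (s,x) (1,0)) s := by
    intro s hs x hx
    have h1 : HasDerivWithinAt (fun s : ℝ => (s, x)) ((1:ℝ), (0:ℝ)) (Ici 0) s :=
      ((hasDerivAt_id s).prodMk (hasDerivAt_const s x)).hasDerivWithinAt
    have h2 := (hfd (s,x) ⟨hs.le, hx⟩).comp_hasDerivWithinAt s h1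
      (show MapsTo _ _ S from fun u hu => ⟨hu, hx⟩)
    exact h2.hasDerivAt (Ici_mem_nhds hs)
  have hdx : ∀ x ∈ Ioo (0:ℝ) 1, HasDerivAt (fun y => ρ t y) (G (t,x) (0,1)) x := by
    intro x hx
    have h1 : HasDerivWithinAt (fun y : ℝ => (t, y)) ((0:ℝ), (1:ℝ)) (Icc 0 1) x :=
      ((hasDerivAt_const x t).prodMk (hasDerivAt_id x)).hasDerivWithinAt
    have h2 := (hfd (t,x) ⟨ht.le, Ioo_subset_Icc_self hx⟩).comp_hasDerivWithinAt x h1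
      (show MapsTo _ _ S from fun u hu => ⟨ht.le, hu⟩)
    exact h2.hasDerivAt (Icc_mem_nhds hx.1 hx.2)
  have hsl : ∀ s > (0:ℝ), ContinuousOn (fun x : ℝ => (s, x)) (Icc (0:ℝ) 1) := by
    intro s _; fun_prop
  have hsm : ∀ s > (0:ℝ), MapsTo (fun x : ℝ => (s, x)) (Icc (0:ℝ) 1) S :=
    fun s hs x hx => ⟨le_of_lt hs, hx⟩
  have hρc : ∀ s > (0:ℝ), ContinuousOn (fun x => ρ s x) (Icc (0:ℝ) 1) := fun s hs =>
    hfc.comp (hsl s hs) (hsm s hs)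
  have hgt : ContinuousOn (fun p : ℝ × ℝ => G (p.1,p.2) (1,0)) S := hGc.clm_apply continuousOn_const
  have hgx : ContinuousOn (fun x => G (t,x) (0,1)) (Icc (0:ℝ) 1) :=
    (hGc.comp (hsl t ht) (hsm t ht)).clm_apply continuousOn_const
  have hI : ∀ h : ℝ → ℝ, ContinuousOn h (Icc (0:ℝ) 1) → IntervalIntegrable h volume 0 1 := by
    intro h hh
    apply ContinuousOn.intervalIntegrable
    rwa [uIcc_of_le zero_le_one]
  have hp : ∀ x ∈ Ioo (0:ℝ) 1, G (t,x) (1,0) = -lamW t * G (t,x) (0,1) := by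
    intro x hx
    have h := hpde t ht x hx
    rw [(hdt t ht x (Ioo_subset_Icc_self hx)).deriv, (hdx x hx).deriv] at h
    linarith
  have hcongr : ∀ u v : ℝ → ℝ, (∀ x ∈ Ioo (0:ℝ) 1, u x = v x) →
      ∫ x in (0:ℝ)..1, u x = ∫ x in (0:ℝ)..1, v x := by
    intro u v h
    rw [intervalIntegral.integral_of_le zero_le_one, intervalIntegral.integral_of_le zero_le_one,
      integral_Ioc_eq_integral_Ioo, integral_Ioc_eq_integral_Ioo]
    exact setIntegral_congr_fun measurableSet_Ioo h
  -- derivative of W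
  have hWd : HasDerivAt W (lamW t * (ρ t 0 - ρ t 1)) t := by
    have h1 := deriv_under_integral ρ (fun s x => G (s,x) (1,0)) t ht hρc hdt hgt
    have h2 : ∫ x in (0:ℝ)..1, G (t,x) (1,0) = lamW t * (ρ t 0 - ρ t 1) := by
      rw [hcongr _ _ hp, intervalIntegral.integral_const_mul,
        intervalIntegral.integral_eq_sub_of_hasDerivAt_of_le zero_le_one (hρc t ht) hdx (hI _ hgx)]
      ring
    rw [h2] at h1
    exact (funext hW : W = _) ▸ h1
  set V : ℝ → ℝ := fun s => ∫ x in (0:ℝ)..1, (ρ s x) ^ 2 * Real.exp (-β * x) with hV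
  have hVd : HasDerivAt V
      (lamW t * (ρ t 0 ^ 2 - Real.exp (-β) * ρ t 1 ^ 2 - β * V t)) t := by
    have h1 := deriv_under_integral (fun s x => (ρ s x) ^ 2 * Real.exp (-β * x))
      (fun s x => 2 * ρ s x * G (s,x) (1,0) * Real.exp (-β * x)) t ht
      (fun s hs => by have := hρc s hs; fun_prop)
      (fun s hs x hx => by
        have := ((hdt s hs x hx).fun_pow 2).mul_const (Real.exp (-β * x))
        exact this.congr_deriv (by norm_num))
      (((continuousOn_const.mul hfc).mul hgt).mul (by fun_prop))
    have hρt := hρc t ht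
    have hq1 : ContinuousOn (fun x => 2 * ρ t x * G (t,x) (0,1) * Real.exp (-β * x))
        (Icc (0:ℝ) 1) := ((continuousOn_const.mul hρt).mul hgx).mul (by fun_prop)
    have hq2 : ContinuousOn (fun x => β * ((ρ t x) ^ 2 * Real.exp (-β * x)))
        (Icc (0:ℝ) 1) := by fun_prop
    have h3 : ∫ x in (0:ℝ)..1, (2 * ρ t x * G (t,x) (0,1) * Real.exp (-β * x)
        - β * ((ρ t x) ^ 2 * Real.exp (-β * x)))
        = ρ t 1 ^ 2 * Real.exp (-β * 1) - ρ t 0 ^ 2 * Real.exp (-β * 0) := by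
      refine intervalIntegral.integral_eq_sub_of_hasDerivAt_of_le
        (f := fun x => ρ t x ^ 2 * Real.exp (-β * x)) zero_le_one (by fun_prop) ?_
        (hI _ (hq1.sub hq2))
      intro x hx
      have e : HasDerivAt (fun x => Real.exp (-β * x)) (Real.exp (-β * x) * (-β)) x := by
        simpa using ((hasDerivAt_id x).const_mul (-β)).exp
      have := ((hdx x hx).fun_pow 2).fun_mul e
      exact this.congr_deriv (by norm_num; ring)
    rw [intervalIntegral.integral_sub (hI _ hq1) (hI _ hq2),
      intervalIntegral.integral_const_mul] at h3
    have h2 : ∫ x in (0:ℝ)..1, 2 * ρ t x * G (t,x) (1,0) * Real.exp (-β * x)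
        = lamW t * (ρ t 0 ^ 2 - Real.exp (-β) * ρ t 1 ^ 2 - β * V t) := by
      rw [hcongr _ (fun x => -lamW t * (2 * ρ t x * G (t,x) (0,1) * Real.exp (-β * x)))
        (fun x hx => by rw [hp x hx]; ring), intervalIntegral.integral_const_mul]
      simp only [mul_one, mul_zero, Real.exp_zero] at h3
      simp only [hV]
      linear_combination (-lamW t) * h3
    rw [h2] at h1
    exact h1
  have hLd : HasDerivAt L (lamW t * (ρ t 0 ^ 2 - Real.exp (-β) * ρ t 1 ^ 2 - β * V t)
      + a * (2 * W t * (lamW t * (ρ t 0 - ρ t 1)))) t := by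
    have h := hVd.fun_add ((hWd.fun_pow 2).const_mul a)
    have e : L = fun s => V s + a * W s ^ 2 := funext hL
    rw [e]
    exact h.congr_deriv (by norm_num)
  rw [hLd.deriv]
  have hLt : L t = V t + a * W t ^ 2 := hL t
  have hlam : 0 < lamW t := by rw [hlamW]; exact div_pos hA (hWpos t ht.le)
  have hcs : W t ^ 2 ≤ C₁ * V t := by
    rw [hW t]; exact cauchy_weight (fun x => ρ t x) β C₁ hβ hC₁ (hρc t ht)
  have hC1 : 1 ≤ C₁ := by
    rw [hC₁, le_div_iff₀ hβ]; have := Real.add_one_le_exp β; linarith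
  have hE1 : Real.exp (-β) < 1 := by rw [Real.exp_lt_one_iff]; linarith
  have hθ0 : 0 ≤ θ := by rw [hθ]; positivity
  have hbt := hbc t ht
  generalize V t = v at *
  generalize W t = w at *
  generalize ρ t 0 = z at *
  generalize ρ t 1 = y at *
  generalize lamW t = l at *
  generalize d t = δ at *
  generalize Real.exp (-β) = E at *
  set m := (2 * k - E) / (1 - k) with hm
  have hk' : 0 < 1 - k := by linarith
  have hmk : m * (1 - k) = 2 * k - E := by rw [hm]; field_simp
  have ham : a = θ * m := by rw [ha, hm]; ring
  have hm0 : m ≤ 0 := div_nonpos_of_nonpos_of_nonneg (by linarith) hk'.le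
  have hq := quad_form k E m y (θ * w) δ hk0 hkβ hE1
  have hC0 : 0 < C₁ := by linarith
  have hv0 : 0 ≤ v := by
    have : 0 ≤ C₁ * v := le_trans (sq_nonneg w) hcs
    exact nonneg_of_mul_nonneg_right this hC0
  have hFC : F / C₁ ≤ F := div_le_self hFpos hC1
  have hFC0 : 0 ≤ F / C₁ := by positivity
  set P := F / C₁ with hP
  set Q := (2 - E) + m ^ 2 with hQ
  have hQ0 : 0 ≤ Q := by rw [hQ]; nlinarith [sq_nonneg m]
  have b1 : P * v ≤ F * v := mul_le_mul_of_nonneg_right hFC hv0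
  have b2 : θ ^ 2 * Q * w ^ 2 ≤ θ ^ 2 * Q * (C₁ * v) := mul_le_mul_of_nonneg_left hcs (by positivity)
  have b3 : P * (θ * m * w ^ 2) ≤ 0 := by
    apply mul_nonpos_of_nonneg_of_nonpos hFC0
    exact mul_nonpos_of_nonpos_of_nonneg (mul_nonpos_of_nonneg_of_nonpos hθ0 hm0) (sq_nonneg w)
  have b4 : F * v = β * v - θ ^ 2 * Q * (C₁ * v) := by rw [hF]; ring
  have b5 : z ^ 2 - E * y ^ 2 + 2 * (θ * m) * w * (z - y) ≤ Q * (θ * w) ^ 2 + 3 / 2 * E * δ ^ 2 := by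
    refine le_trans (le_of_eq ?_) hq
    rw [hbt, ← hmk]
    ring
  have main : z ^ 2 - E * y ^ 2 - β * v + 2 * (θ * m) * w * (z - y)
      ≤ -P * (v + θ * m * w ^ 2) + 3 / 2 * E * δ ^ 2 := by
    have : Q * (θ * w) ^ 2 = θ ^ 2 * Q * w ^ 2 := by ring
    linarith
  have := mul_le_mul_of_nonneg_left main hlam.le
  rw [hLt, ham]
  linarith
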